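/- (Theorem 4.1(ii), chamber C₁₃₂.) Uniformly over all λ ∈ C⁺ and all X ∈ a with x1 ≥ x3 ≥ x2, one has E_k(X,λ) ≍ e^{⟨λ,X⁺⟩} / [ (1+α_λ α_{X⁺})^{k} (1+β_λ β_{X⁺})^{k+1} (1+γ_λ γ_{X⁺})^{k} ]. -/

import Mathlib

open Real MeasureTheory

/-- The rank-one Dunkl kernel `E_k^{rk1}(x,v)`. -/
noncomputable def Erk1 (k x v : ℝ) : ℝ :=
  (Real.Gamma (k + 1/2) / (Real.sqrt Real.pi * Real.Gamma k)) *
    ∫ z in (-1 : ℝ)..1, Real.exp (z * x * v) * (1 - z) ^ (k - 1) * (1 + z) ^ k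

/-- The normalized modified Bessel function `𝒥_a(y)`, for `a > -1/2`. -/
noncomputable def besselJ (a y : ℝ) : ℝ :=
  (Real.Gamma (a + 1) / (Real.sqrt Real.pi * Real.Gamma (a + 1/2))) *
    ∫ z in (-1 : ℝ)..1, Real.exp (y * z) * (1 - z ^ 2) ^ (a - 1/2)

/-- `W_k(λ,ν)`. -/
noncomputable def Wk (k l1 l2 l3 n1 n2 : ℝ) : ℝ :=
  ((l1 - n1) * (l1 - n2) * (n1 - l2) * (l2 - n2) * (n1 - l3) * (n2 - l3)) ^ (k - 1)

/-- `V(λ) = (λ1-λ2)(λ1-λ3)(λ2-λ3)`. -/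
def Vlam (l1 l2 l3 : ℝ) : ℝ := (l1 - l2) * (l1 - l3) * (l2 - l3)

/-- The `A₂` Dunkl kernel `E_k(X,λ)`, defined via the rank-one kernel formula. -/
noncomputable def EkA2 (k x1 x2 x3 l1 l2 l3 : ℝ) : ℝ :=
  (3 * Real.Gamma (3 * k) / (Vlam l1 l2 l3 ^ (2 * k) * Real.Gamma k ^ 2)) *
    ∫ n2 in l3..l2, ∫ n1 in l2..l1,
      ((n1 - l2) * (l1 - n2) * Erk1 k ((x1 - x2) / 2) (n1 - n2)
        + (l1 - n1) * (l2 - n2) * Erk1 k (-(x1 - x2) / 2) (n1 - n2))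
      * ((n1 - l3) * (n2 - l3)) * Real.exp ((x1 + x2 - 2 * x3) * (n1 + n2) / 2)
      * Wk k l1 l2 l3 n1 n2

/-!
The rank-one kernel is `e^{|xv|}` times a Laplace transform of a beta density on `[0, 2]`, so it is
comparable to `e^{xv} (1 + 2xv)^{-k}` for `xv ≥ 0`, and to `e^{-xv} (1 - 2xv)^{-(k+1)}` for
`xv ≤ 0`. In the gap coordinates `u = λ₁ - ν₁`, `s = ν₁ - λ₂`, `t = λ₂ - ν₂`, `w = ν₂ - λ₃` all
exponentials in the integrand of `EkA2` combine to `e^{(a + b)(λ₁ - λ₃)/2} e^{-au} e^{-bw}` up to a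
constant exponential, where `a = x₁ - x₃` and `b = x₃ - x₂` are the simple roots at `X⁺`.

The remaining algebraic factor couples `(u, s)` and `(w, t)` through `s + u + t`, `s + t + w` and
`1 + (a + b)(s + t)`, but after extracting a factor that depends only on `a + b` and `λ₁ - λ₃` it is
bounded above and below by products of a function of `(u, s)` and a function of `(w, t)`. Both are
sums of beta densities, and `∫₀^L u^{m-1} (L - u)^{n-1} e^{-cu} du ≍ L^{m+n-1} (1 + cL)^{-m}`
gives the two simple-root factors. The exponent `k + 1` at the second root comes from the additional
factor `w = ν₂ - λ₃` in the integrand, which vanishes where `e^{-bw}` concentrates.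
-/

/-- Two-sided comparability `f ≍ g` with an explicit constant: `C⁻¹ g ≤ f ≤ C g`. Uniformity over a
family of parameters is expressed by quantifying `C` first. -/
def WithinFactor (C f g : ℝ) : Prop := C⁻¹ * g ≤ f ∧ f ≤ C * g

namespace WithinFactor

variable {C f g r : ℝ}

theorem of_le_of_le {c : ℝ} (hc : 0 < c) (hC : 0 < C) (hg : 0 ≤ g) (hl : c * g ≤ f)
    (hu : f ≤ C * g) : WithinFactor (C + c⁻¹) f g := by
  have hinv : (C + c⁻¹)⁻¹ ≤ c := inv_le_of_inv_le₀ hc (le_add_of_nonneg_left hC.le)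
  have hle : C ≤ C + c⁻¹ := le_add_of_nonneg_right (inv_nonneg.2 hc.le)
  exact ⟨(mul_le_mul_of_nonneg_right hinv hg).trans hl,
    hu.trans (mul_le_mul_of_nonneg_right hle hg)⟩

theorem const_mul (h : WithinFactor C f g) (hr : 0 ≤ r) : WithinFactor C (r * f) (r * g) := by
  refine ⟨?_, ?_⟩
  · rw [mul_left_comm]
    exact mul_le_mul_of_nonneg_left h.1 hr
  · rw [mul_left_comm]
    exact mul_le_mul_of_nonneg_left h.2 hr

theorem absorb_const (h : WithinFactor C f (r * g)) (hC : 0 < C) (hr : 0 < r) (hg : 0 ≤ g) :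
    WithinFactor (C * r + (C⁻¹ * r)⁻¹) f g :=
  of_le_of_le (by positivity) (by positivity) hg (by simpa only [mul_assoc] using h.1)
    (by simpa only [mul_assoc] using h.2)

theorem mono {C' : ℝ} (h : WithinFactor C f g) (hC : 0 < C) (hCC' : C ≤ C') (hg : 0 ≤ g) :
    WithinFactor C' f g :=
  ⟨(mul_le_mul_of_nonneg_right (inv_anti₀ hC hCC') hg).trans h.1,
    h.2.trans (mul_le_mul_of_nonneg_right hCC' hg)⟩

theorem add {f' g' : ℝ} (h : WithinFactor C f g) (h' : WithinFactor C f' g') :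
    WithinFactor C (f + f') (g + g') := by
  unfold WithinFactor
  rw [mul_add, mul_add]
  exact ⟨add_le_add h.1 h'.1, add_le_add h.2 h'.2⟩

theorem rpow (h : WithinFactor C f g) (hC : 0 < C) (hf : 0 < f) (hg : 0 < g) :
    WithinFactor (C ^ |r|) (f ^ r) (g ^ r) := by
  have hCinv : 0 < C⁻¹ := inv_pos.2 hC
  unfold WithinFactor
  rw [← inv_rpow hC.le]
  rcases le_total 0 r with hr | hr
  · rw [abs_of_nonneg hr, ← mul_rpow hCinv.le hg.le, ← mul_rpow hC.le hg.le]
    exact ⟨rpow_le_rpow (by positivity) h.1 hr, rpow_le_rpow hf.le h.2 hr⟩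
  · rw [abs_of_nonpos hr, rpow_neg hCinv.le, rpow_neg hC.le, ← inv_rpow hCinv.le, ← inv_rpow hC.le,
      inv_inv, ← mul_rpow hC.le hg.le, ← mul_rpow hCinv.le hg.le]
    exact ⟨rpow_le_rpow_of_nonpos hf h.2 hr,
      rpow_le_rpow_of_nonpos (by positivity) h.1 hr⟩

end WithinFactor

theorem withinFactor_rpow_one_of_half_le {r x : ℝ} (hx : 1 / 2 ≤ x) (hx1 : x ≤ 1) :
    WithinFactor (2 ^ |r|) (x ^ r) 1 := by
  have h : WithinFactor 2 x 1 := ⟨by linarith, by linarith⟩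
  simpa only [one_rpow] using h.rpow (r := r) two_pos (by linarith) one_pos

theorem rpow_mul_exp_neg_le {m x : ℝ} (hm : 0 < m) (hx : 0 ≤ x) :
    x ^ m * exp (-x) ≤ m ^ m := by
  have hlin : x ≤ m * exp (x / m) := by
    rw [← div_le_iff₀' hm]
    linarith [add_one_le_exp (x / m)]
  have hpow : x ^ m ≤ m ^ m * exp x := by
    calc x ^ m ≤ (m * exp (x / m)) ^ m := rpow_le_rpow hx hlin hm.le
      _ = m ^ m * exp x := by
        rw [mul_rpow hm.le (exp_pos _).le, ← exp_mul, div_mul_cancel₀ x hm.ne']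
  rwa [exp_neg, ← div_eq_mul_inv, div_le_iff₀ (exp_pos x)]

/-! ### Double integrals between products -/

section ProductIntegral

variable {α β : Type*} [MeasurableSpace α] [MeasurableSpace β] {μ : Measure α} {ν : Measure β}
  [SFinite μ] [SFinite ν] {s : Set α} {t : Set β} {F : α → β → ℝ} {f : α → ℝ} {g : β → ℝ}

theorem ae_prod_restrict_mem (hs : MeasurableSet s) (ht : MeasurableSet t) :
    ∀ᵐ z ∂(μ.restrict s).prod (ν.restrict t), z.1 ∈ s ∧ z.2 ∈ t := by
  rw [Measure.prod_restrict]
  exact ae_restrict_mem (hs.prod ht)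

theorem integrable_uncurry_of_le_mul (hs : MeasurableSet s) (ht : MeasurableSet t)
    (hF : Measurable (Function.uncurry F)) (hf : IntegrableOn f s μ) (hg : IntegrableOn g t ν)
    (hF0 : ∀ x ∈ s, ∀ y ∈ t, 0 ≤ F x y) (hFle : ∀ x ∈ s, ∀ y ∈ t, F x y ≤ f x * g y) :
    Integrable (Function.uncurry F) ((μ.restrict s).prod (ν.restrict t)) := by
  refine (hf.mul_prod hg).mono' hF.aestronglyMeasurable ?_
  filter_upwards [ae_prod_restrict_mem hs ht] with z hz
  rw [norm_eq_abs, Function.uncurry_apply_pair, abs_of_nonneg (hF0 _ hz.1 _ hz.2)]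
  exact hFle _ hz.1 _ hz.2

theorem setIntegral_setIntegral_le_mul (hs : MeasurableSet s) (ht : MeasurableSet t)
    (hF : Integrable (Function.uncurry F) ((μ.restrict s).prod (ν.restrict t)))
    (hf : IntegrableOn f s μ) (hg : IntegrableOn g t ν)
    (hFle : ∀ x ∈ s, ∀ y ∈ t, F x y ≤ f x * g y) :
    ∫ x in s, ∫ y in t, F x y ∂ν ∂μ ≤ (∫ x in s, f x ∂μ) * ∫ y in t, g y ∂ν := by
  rw [← integral_prod_mul, integral_integral hF]
  refine integral_mono_ae hF (hf.mul_prod hg) ?_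
  filter_upwards [ae_prod_restrict_mem hs ht] with z hz using hFle _ hz.1 _ hz.2

theorem mul_le_setIntegral_setIntegral (hs : MeasurableSet s) (ht : MeasurableSet t)
    (hF : Integrable (Function.uncurry F) ((μ.restrict s).prod (ν.restrict t)))
    (hf : IntegrableOn f s μ) (hg : IntegrableOn g t ν)
    (hleF : ∀ x ∈ s, ∀ y ∈ t, f x * g y ≤ F x y) :
    (∫ x in s, f x ∂μ) * ∫ y in t, g y ∂ν ≤ ∫ x in s, ∫ y in t, F x y ∂ν ∂μ := by
  rw [← integral_prod_mul, integral_integral hF]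
  refine integral_mono_ae (hf.mul_prod hg) hF ?_
  filter_upwards [ae_prod_restrict_mem hs ht] with z hz using hleF _ hz.1 _ hz.2

end ProductIntegral

theorem integral_integral_mem_Icc_of_le_mul {F : ℝ → ℝ → ℝ} {f g f' g' : ℝ → ℝ} {a b c d : ℝ}
    (hab : a ≤ b) (hcd : c ≤ d) (hF : Measurable (Function.uncurry F))
    (hf : IntervalIntegrable f volume a b) (hg : IntervalIntegrable g volume c d)
    (hf' : IntervalIntegrable f' volume a b) (hg' : IntervalIntegrable g' volume c d)
    (hF0 : ∀ x ∈ Set.Ioo a b, ∀ y ∈ Set.Ioo c d, 0 ≤ F x y)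
    (hleF : ∀ x ∈ Set.Ioo a b, ∀ y ∈ Set.Ioo c d, f x * g y ≤ F x y)
    (hFle : ∀ x ∈ Set.Ioo a b, ∀ y ∈ Set.Ioo c d, F x y ≤ f' x * g' y) :
    (∫ x in a..b, ∫ y in c..d, F x y) ∈
      Set.Icc ((∫ x in a..b, f x) * ∫ y in c..d, g y)
        ((∫ x in a..b, f' x) * ∫ y in c..d, g' y) := by
  rw [intervalIntegrable_iff_integrableOn_Ioo_of_le ‹_›] at hf hg hf' hg'
  simp only [intervalIntegral.integral_of_le hab, intervalIntegral.integral_of_le hcd,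
    integral_Ioc_eq_integral_Ioo]
  have hint := integrable_uncurry_of_le_mul measurableSet_Ioo measurableSet_Ioo hF hf' hg' hF0 hFle
  exact ⟨mul_le_setIntegral_setIntegral measurableSet_Ioo measurableSet_Ioo hint hf hg hleF,
    setIntegral_setIntegral_le_mul measurableSet_Ioo measurableSet_Ioo hint hf' hg' hFle⟩

/-! ### Laplace transforms of beta densities -/

/-- The integrand `u^{m-1} v^{n-1} e^{-cu}` of the Laplace transform of a beta density; in use, `u`
and `v` are the distances from the variable of integration to the two ends of an interval. -/
noncomputable def betaWeight (m n c u v : ℝ) : ℝ := u ^ (m - 1) * v ^ (n - 1) * exp (-(c * u))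

section BetaWeight

variable {m n c L : ℝ}

theorem betaWeight_nonneg {u v : ℝ} (hu : 0 ≤ u) (hv : 0 ≤ v) : 0 ≤ betaWeight m n c u v := by
  unfold betaWeight
  positivity

theorem betaWeight_mul_mul {u v : ℝ} (hL : 0 < L) (hu : 0 ≤ u) (hv : 0 ≤ v) :
    betaWeight m n c (L * u) (L * v) = L ^ (m + n - 2) * betaWeight m n (c * L) u v := by
  have hexp : m + n - 2 = m - 1 + (n - 1) := by ring
  unfold betaWeight
  rw [mul_rpow hL.le hu, mul_rpow hL.le hv, hexp, rpow_add hL, mul_assoc c L u]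
  ring

theorem intervalIntegrable_betaWeight_unit (hm : 0 < m) (hn : 0 < n) :
    IntervalIntegrable (fun u ↦ betaWeight m n c u (1 - u)) volume 0 1 := by
  have hbeta := (Complex.betaIntegral_convergent (u := m) (v := n) (by simpa) (by simpa)).norm
  refine (hbeta.mul_continuousOn (g := fun u ↦ exp (-(c * u))) (by fun_prop)).congr ?_
  intro u hu
  rw [Set.uIoc_of_le zero_le_one] at hu
  have hu' : 0 ≤ 1 - u := sub_nonneg.2 hu.2
  have hcast : (u : ℂ) ^ ((m : ℂ) - 1) * (1 - (u : ℂ)) ^ ((n : ℂ) - 1) =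
      ((u ^ (m - 1) * (1 - u) ^ (n - 1) : ℝ) : ℂ) := by
    push_cast [Complex.ofReal_cpow hu.1.le, Complex.ofReal_cpow hu']
    rfl
  simp only [hcast, betaWeight, Complex.norm_real, norm_eq_abs]
  rw [abs_of_nonneg (mul_nonneg (rpow_nonneg hu.1.le _) (rpow_nonneg hu' _))]

theorem intervalIntegrable_betaWeight (hm : 0 < m) (hn : 0 < n) (hL : 0 < L) :
    IntervalIntegrable (fun u ↦ betaWeight m n c u (L - u)) volume 0 L := by
  have hunit := ((intervalIntegrable_betaWeight_unit (c := c * L) hm hn).comp_mul_left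
    (c := L⁻¹)).const_mul (L ^ (m + n - 2))
  rw [zero_div, one_div, inv_inv] at hunit
  refine hunit.congr ?_
  intro u hu
  rw [Set.uIoc_of_le hL.le] at hu
  have hv : 0 ≤ 1 - L⁻¹ * u := by
    rw [sub_nonneg, inv_mul_le_iff₀ hL, mul_one]
    exact hu.2
  have hu0 : 0 ≤ L⁻¹ * u := mul_nonneg (inv_nonneg.2 hL.le) hu.1.le
  simp only [← betaWeight_mul_mul hL hu0 hv, mul_sub, mul_inv_cancel_left₀ hL.ne', mul_one]

theorem integral_betaWeight_eq_unit (hL : 0 < L) :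
    ∫ u in (0 : ℝ)..L, betaWeight m n c u (L - u) =
      L ^ (m + n - 1) * ∫ u in (0 : ℝ)..1, betaWeight m n (c * L) u (1 - u) := by
  have hsub := intervalIntegral.mul_integral_comp_mul_left (a := 0) (b := 1)
    (f := fun u ↦ betaWeight m n c u (L - u)) L
  rw [mul_zero, mul_one] at hsub
  have hcongr : ∫ u in (0 : ℝ)..1, betaWeight m n c (L * u) (L - L * u) =
      ∫ u in (0 : ℝ)..1, L ^ (m + n - 2) * betaWeight m n (c * L) u (1 - u) := by
    refine intervalIntegral.integral_congr fun u hu ↦ ?_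
    rw [Set.uIcc_of_le zero_le_one] at hu
    simp only [← betaWeight_mul_mul hL hu.1 (sub_nonneg.2 hu.2), mul_sub, mul_one]
  have hpow : L ^ (m + n - 1) = L * L ^ (m + n - 2) := by
    rw [mul_comm, ← rpow_add_one hL.ne']
    ring_nf
  rw [← hsub, hcongr, intervalIntegral.integral_const_mul, hpow, mul_assoc]

theorem integral_rpow_mul_exp_neg_le_Gamma (hm : 0 < m) (hc : 0 < c) :
    ∫ u in (0 : ℝ)..1, u ^ (m - 1) * exp (-(c * u)) ≤ Gamma m * c ^ (-m) := by
  have hGamma := integral_rpow_mul_exp_neg_mul_Ioi hm hc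
  rw [one_div, inv_rpow hc.le, ← rpow_neg hc.le, mul_comm] at hGamma
  rw [← hGamma, intervalIntegral.integral_of_le zero_le_one]
  refine setIntegral_mono_set ?_ ?_ Set.Ioc_subset_Ioi_self.eventuallyLE
  · refine (integrableOn_rpow_mul_exp_neg_mul_rpow (p := 1) (s := m - 1) (by linarith) one_pos
      hc).congr_fun (fun u _ ↦ ?_) measurableSet_Ioi
    simp only [rpow_one, neg_mul]
  · filter_upwards [ae_restrict_mem measurableSet_Ioi] with u hu
    exact mul_nonneg (rpow_nonneg (Set.mem_Ioi.1 hu).le _) (exp_pos _).le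

/-- Near `0` the factor `v^{n-1}` is bounded, and away from `0` the exponential is `O(c^{-m})`. -/
theorem betaWeight_le_near_add_far {u : ℝ} (hm : 0 < m) (hc : 0 < c) (hu : u ∈ Set.Ioo 0 1) :
    betaWeight m n c u (1 - u) ≤ 2 ^ |n - 1| * (u ^ (m - 1) * exp (-(c * u))) +
      (2 * m) ^ m * c ^ (-m) * betaWeight m n 0 u (1 - u) := by
  obtain ⟨hu0, hu1⟩ := hu
  have : 0 < 1 - u := sub_pos.2 hu1
  simp only [betaWeight, zero_mul, neg_zero, exp_zero, mul_one]
  rcases le_total u (1 / 2) with hle | hge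
  · have hbdd := (withinFactor_rpow_one_of_half_le (r := n - 1) (x := 1 - u)
      (by linarith) (by linarith)).2
    calc u ^ (m - 1) * (1 - u) ^ (n - 1) * exp (-(c * u))
        ≤ u ^ (m - 1) * (2 ^ |n - 1| * 1) * exp (-(c * u)) := by gcongr
      _ = 2 ^ |n - 1| * (u ^ (m - 1) * exp (-(c * u))) := by ring
      _ ≤ _ := le_add_of_nonneg_right (by positivity)
  · have hdecay : exp (-(c * u)) ≤ (2 * m) ^ m * c ^ (-m) := by
      have hexp := rpow_mul_exp_neg_le hm (x := c / 2) (by positivity)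
      rw [div_rpow hc.le two_pos.le, div_mul_eq_mul_div, div_le_iff₀ (by positivity)] at hexp
      rw [mul_rpow two_pos.le hm.le, rpow_neg hc.le, ← div_eq_mul_inv, le_div_iff₀ (by positivity)]
      have hmono : exp (-(c * u)) ≤ exp (-(c / 2)) := exp_le_exp.2 (by nlinarith)
      calc exp (-(c * u)) * c ^ m ≤ exp (-(c / 2)) * c ^ m := by gcongr
        _ ≤ 2 ^ m * m ^ m := by linarith
    calc u ^ (m - 1) * (1 - u) ^ (n - 1) * exp (-(c * u))
        ≤ u ^ (m - 1) * (1 - u) ^ (n - 1) * ((2 * m) ^ m * c ^ (-m)) := by gcongr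
      _ = (2 * m) ^ m * c ^ (-m) * (u ^ (m - 1) * (1 - u) ^ (n - 1)) := by ring
      _ ≤ _ := le_add_of_nonneg_left (by positivity)

theorem exists_integral_betaWeight_unit_le (hm : 0 < m) (hn : 0 < n) :
    ∃ C, 0 < C ∧ ∀ c, 0 < c → ∫ u in (0 : ℝ)..1, betaWeight m n c u (1 - u) ≤ C * c ^ (-m) := by
  set I : ℝ := ∫ u in (0 : ℝ)..1, betaWeight m n 0 u (1 - u)
  have hI0 : 0 ≤ I := intervalIntegral.integral_nonneg zero_le_one fun u hu ↦
    betaWeight_nonneg hu.1 (sub_nonneg.2 hu.2)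
  refine ⟨2 ^ |n - 1| * Gamma m + (2 * m) ^ m * I, by positivity, fun c hc ↦ ?_⟩
  have hnear : IntervalIntegrable (fun u ↦ 2 ^ |n - 1| * (u ^ (m - 1) * exp (-(c * u))))
      volume 0 1 := ((intervalIntegral.intervalIntegrable_rpow' (by linarith)).mul_continuousOn
        (by fun_prop)).const_mul _
  have hfar := (intervalIntegrable_betaWeight_unit (c := 0) hm hn).const_mul
    ((2 * m) ^ m * c ^ (-m))
  calc ∫ u in (0 : ℝ)..1, betaWeight m n c u (1 - u)
      ≤ ∫ u in (0 : ℝ)..1, (2 ^ |n - 1| * (u ^ (m - 1) * exp (-(c * u))) +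
          (2 * m) ^ m * c ^ (-m) * betaWeight m n 0 u (1 - u)) :=
        intervalIntegral.integral_mono_on_of_le_Ioo zero_le_one
          (intervalIntegrable_betaWeight_unit hm hn) (hnear.add hfar)
          fun u hu ↦ betaWeight_le_near_add_far hm hc hu
    _ = 2 ^ |n - 1| * (∫ u in (0 : ℝ)..1, u ^ (m - 1) * exp (-(c * u))) +
          (2 * m) ^ m * c ^ (-m) * I := by
        rw [intervalIntegral.integral_add hnear hfar, intervalIntegral.integral_const_mul,
          intervalIntegral.integral_const_mul]
    _ ≤ 2 ^ |n - 1| * (Gamma m * c ^ (-m)) + (2 * m) ^ m * c ^ (-m) * I := by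
        gcongr
        exact integral_rpow_mul_exp_neg_le_Gamma hm hc
    _ = (2 ^ |n - 1| * Gamma m + (2 * m) ^ m * I) * c ^ (-m) := by ring

theorem betaWeight_le_exp_mul {u v : ℝ} (hu : 0 ≤ u) (hu1 : u ≤ 1) (hv : 0 ≤ v) :
    betaWeight m n c u v ≤ exp 1 * betaWeight m n (1 + c) u v := by
  have hexp : exp (-(c * u)) ≤ exp 1 * exp (-((1 + c) * u)) := by
    rw [← exp_add]
    exact exp_le_exp.2 (by linarith)
  unfold betaWeight
  calc u ^ (m - 1) * v ^ (n - 1) * exp (-(c * u))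
      ≤ u ^ (m - 1) * v ^ (n - 1) * (exp 1 * exp (-((1 + c) * u))) := by gcongr
    _ = _ := by ring

theorem integral_betaWeight_unit_le_exp_mul (hm : 0 < m) (hn : 0 < n) :
    ∫ u in (0 : ℝ)..1, betaWeight m n c u (1 - u) ≤
      exp 1 * ∫ u in (0 : ℝ)..1, betaWeight m n (1 + c) u (1 - u) := by
  rw [← intervalIntegral.integral_const_mul]
  exact intervalIntegral.integral_mono_on zero_le_one (intervalIntegrable_betaWeight_unit hm hn)
    ((intervalIntegrable_betaWeight_unit hm hn).const_mul _)
    fun u hu ↦ betaWeight_le_exp_mul hu.1 hu.2 (sub_nonneg.2 hu.2)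

/-- The mass of the weight at scale `1 / (1 + c)` next to `0` already has the right order. -/
theorem exists_le_integral_betaWeight_unit (hm : 0 < m) (hn : 0 < n) :
    ∃ K, 0 < K ∧ ∀ c, 0 ≤ c →
      K * (1 + c) ^ (-m) ≤ ∫ u in (0 : ℝ)..1, betaWeight m n c u (1 - u) := by
  set K : ℝ := (2 ^ |n - 1|)⁻¹ * exp (-1)
  refine ⟨K * (2 ^ (-m) / m), by positivity, fun c hc ↦ ?_⟩
  set d : ℝ := (2 * (1 + c))⁻¹ with hd
  have hd0 : 0 < d := by positivity
  have hcd : 2 * (1 + c) * d = 1 := mul_inv_cancel₀ (by positivity)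
  have hd2 : d ≤ 1 / 2 := by nlinarith
  have hint := intervalIntegrable_betaWeight_unit (c := c) hm hn
  have hpow : ∫ u in (0 : ℝ)..d, K * u ^ (m - 1) = K * (2 ^ (-m) / m) * (1 + c) ^ (-m) := by
    rw [intervalIntegral.integral_const_mul, integral_rpow (Or.inl (by linarith)),
      sub_add_cancel, zero_rpow hm.ne', sub_zero, hd, inv_rpow (by positivity),
      ← rpow_neg (by positivity), mul_rpow two_pos.le (by positivity)]
    ring
  calc K * (2 ^ (-m) / m) * (1 + c) ^ (-m) = ∫ u in (0 : ℝ)..d, K * u ^ (m - 1) := hpow.symm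
    _ ≤ ∫ u in (0 : ℝ)..d, betaWeight m n c u (1 - u) := by
        refine intervalIntegral.integral_mono_on_of_le_Ioo hd0.le
          ((intervalIntegral.intervalIntegrable_rpow' (by linarith)).const_mul _)
          (hint.mono_set ?_) fun u hu ↦ ?_
        · rw [Set.uIcc_of_le hd0.le, Set.uIcc_of_le zero_le_one]
          exact Set.Icc_subset_Icc le_rfl (by linarith)
        · have hu0 : 0 < u := hu.1
          have hu1 : u < d := hu.2
          have : 0 < 1 - u := by linarith
          have hend := (withinFactor_rpow_one_of_half_le (r := n - 1) (x := 1 - u)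
            (by linarith) (by linarith)).1
          have hexp : exp (-1) ≤ exp (-(c * u)) := exp_le_exp.2 (by nlinarith)
          calc K * u ^ (m - 1) = u ^ (m - 1) * ((2 ^ |n - 1|)⁻¹ * 1) * exp (-1) := by ring
            _ ≤ u ^ (m - 1) * (1 - u) ^ (n - 1) * exp (-(c * u)) := by gcongr
    _ ≤ ∫ u in (0 : ℝ)..1, betaWeight m n c u (1 - u) := by
        refine intervalIntegral.integral_mono_interval le_rfl hd0.le (by linarith) ?_ hint
        filter_upwards [ae_restrict_mem measurableSet_Ioc] with u hu
        exact betaWeight_nonneg hu.1.le (sub_nonneg.2 hu.2)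

theorem exists_withinFactor_integral_betaWeight (hm : 0 < m) (hn : 0 < n) :
    ∃ C, 0 < C ∧ ∀ L c, 0 < L → 0 ≤ c →
      WithinFactor C (∫ u in (0 : ℝ)..L, betaWeight m n c u (L - u))
        (L ^ (m + n - 1) * (1 + c * L) ^ (-m)) := by
  obtain ⟨C, hC, hupper⟩ := exists_integral_betaWeight_unit_le hm hn
  obtain ⟨K, hK, hlower⟩ := exists_le_integral_betaWeight_unit hm hn
  refine ⟨exp 1 * C + K⁻¹, by positivity, fun L c hL hc ↦ ?_⟩
  have hcL : 0 ≤ c * L := mul_nonneg hc hL.le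
  rw [integral_betaWeight_eq_unit hL]
  refine (WithinFactor.of_le_of_le hK (by positivity) (by positivity) (hlower _ hcL)
    ((integral_betaWeight_unit_le_exp_mul hm hn).trans ?_)).const_mul (by positivity)
  rw [mul_assoc]
  exact mul_le_mul_of_nonneg_left (hupper _ (by positivity)) (exp_pos 1).le

end BetaWeight

/-! ### The rank-one kernel -/

section RankOne

variable {k : ℝ}

theorem erk1_eq_integral_betaWeight (x v : ℝ) :
    Erk1 k x v = Gamma (k + 1 / 2) / (√π * Gamma k) * exp (x * v) *
      ∫ u in (0 : ℝ)..2, betaWeight k (k + 1) (x * v) u (2 - u) := by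
  have hsub := intervalIntegral.integral_comp_sub_left (a := 0) (b := 2)
    (fun z ↦ exp (z * x * v) * (1 - z) ^ (k - 1) * (1 + z) ^ k) 1
  rw [sub_zero, show (1 : ℝ) - 2 = -1 by norm_num] at hsub
  rw [Erk1, ← hsub, mul_assoc, ← intervalIntegral.integral_const_mul (exp (x * v))]
  congr 2 with u
  rw [betaWeight, show (1 - u) * x * v = x * v + -(x * v * u) by ring, exp_add]
  ring_nf

theorem erk1_neg_eq_integral_betaWeight (x v : ℝ) :
    Erk1 k (-x) v = Gamma (k + 1 / 2) / (√π * Gamma k) * exp (x * v) *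
      ∫ u in (0 : ℝ)..2, betaWeight (k + 1) k (x * v) u (2 - u) := by
  have hsub := intervalIntegral.integral_comp_sub_right (a := 0) (b := 2)
    (fun z ↦ exp (z * -x * v) * (1 - z) ^ (k - 1) * (1 + z) ^ k) 1
  rw [zero_sub, show (2 : ℝ) - 1 = 1 by norm_num] at hsub
  rw [Erk1, ← hsub, mul_assoc, ← intervalIntegral.integral_const_mul (exp (x * v))]
  congr 2 with u
  rw [betaWeight, show (u - 1) * -x * v = x * v + -(x * v * u) by ring, exp_add]
  ring_nf

theorem exists_withinFactor_erk1 (hk : 0 < k) :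
    ∃ C, 0 < C ∧ ∀ x v, 0 ≤ x * v →
      WithinFactor C (Erk1 k x v) (exp (x * v) * (1 + x * v * 2) ^ (-k)) := by
  obtain ⟨C, hC, h⟩ := exists_withinFactor_integral_betaWeight hk (add_pos hk one_pos)
  set G : ℝ := Gamma (k + 1 / 2) / (√π * Gamma k) with hG
  have : 0 < G := by positivity
  set r : ℝ := G * 2 ^ (k + (k + 1) - 1)
  refine ⟨C * r + (C⁻¹ * r)⁻¹, by positivity, fun x v hxv ↦ ?_⟩
  refine WithinFactor.absorb_const ?_ hC (by positivity) (by positivity)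
  rw [erk1_eq_integral_betaWeight, ← hG]
  convert (h 2 (x * v) two_pos hxv).const_mul (by positivity : 0 ≤ G * exp (x * v)) using 1
  ring

theorem exists_withinFactor_erk1_neg (hk : 0 < k) :
    ∃ C, 0 < C ∧ ∀ x v, 0 ≤ x * v →
      WithinFactor C (Erk1 k (-x) v) (exp (x * v) * (1 + x * v * 2) ^ (-(k + 1))) := by
  obtain ⟨C, hC, h⟩ := exists_withinFactor_integral_betaWeight (add_pos hk one_pos) hk
  set G : ℝ := Gamma (k + 1 / 2) / (√π * Gamma k) with hG
  have : 0 < G := by positivity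
  set r : ℝ := G * 2 ^ (k + 1 + k - 1)
  refine ⟨C * r + (C⁻¹ * r)⁻¹, by positivity, fun x v hxv ↦ ?_⟩
  refine WithinFactor.absorb_const ?_ hC (by positivity) (by positivity)
  rw [erk1_neg_eq_integral_betaWeight, ← hG]
  convert (h 2 (x * v) two_pos hxv).const_mul (by positivity : 0 ≤ G * exp (x * v)) using 1
  ring

@[fun_prop]
theorem measurable_erk1 (x : ℝ) : Measurable (Erk1 k x) := by
  unfold Erk1
  simp only [intervalIntegral.integral_of_le (neg_le_self zero_le_one)]
  refine (StronglyMeasurable.integral_prod_right ?_).measurable.const_mul _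
  exact Measurable.stronglyMeasurable (by fun_prop)

end RankOne

/-! ### The integrand in gap coordinates -/

/-- The part of the integrand of `EkA2` carrying `Erk1` at a nonnegative argument, with `Erk1`
replaced by its algebraic factor. In gap coordinates `u = λ₁ - ν₁`, `s = ν₁ - λ₂`, `t = λ₂ - ν₂`,
`w = ν₂ - λ₃`; `h` stands for the value of the highest root at `X⁺`. -/
noncomputable def directTerm (k h s u t w : ℝ) : ℝ :=
  s * (s + u + t) * (1 + h * (s + t)) ^ (-k) * ((s + t + w) * w) *
    (u * (s + u + t) * s * t * (s + t + w) * w) ^ (k - 1)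

/-- The analogue of `directTerm` for the part carrying `Erk1` at a nonpositive argument. -/
noncomputable def swappedTerm (k h s u t w : ℝ) : ℝ :=
  u * t * (1 + h * (s + t)) ^ (-(k + 1)) * ((s + t + w) * w) *
    (u * (s + u + t) * s * t * (s + t + w) * w) ^ (k - 1)

/-- The factor of the estimate that depends only on `h` and on the total gap `L = λ₁ - λ₃`. -/
noncomputable def spreadFactor (k h L : ℝ) : ℝ := (L * (L / (1 + h * L))) ^ k

theorem spreadFactor_nonneg {k h L : ℝ} (hh : 0 ≤ h) (hL : 0 ≤ L) :
    0 ≤ spreadFactor k h L := by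
  unfold spreadFactor
  positivity

theorem div_one_add_mul_le_div {h x y : ℝ} (hh : 0 ≤ h) (hx : 0 ≤ x) (hxy : x ≤ y) :
    x / (1 + h * x) ≤ y / (1 + h * y) := by
  have hy : 0 ≤ y := hx.trans hxy
  rw [div_le_div_iff₀ (by positivity) (by positivity)]
  linarith

section Pointwise

variable {k h s u t w : ℝ}

theorem directTerm_eq (hs : 0 < s) (hu : 0 < u) (ht : 0 < t) (hw : 0 < w) (hh : 0 ≤ h) :
    directTerm k h s u t w = (s * (s + u + t) * (s + t + w) / (1 + h * (s + t))) ^ k *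
      w ^ k * u ^ (k - 1) * t ^ (k - 1) := by
  have hD : 0 < 1 + h * (s + t) := by positivity
  unfold directTerm
  rw [rpow_sub_one (by positivity), rpow_sub_one hu.ne', rpow_sub_one ht.ne', rpow_neg hD.le,
    div_rpow (by positivity) hD.le]
  repeat rw [mul_rpow (by positivity) (by positivity)]
  field_simp

theorem swappedTerm_eq (hs : 0 < s) (hu : 0 < u) (ht : 0 < t) (hw : 0 < w) (hh : 0 ≤ h) :
    swappedTerm k h s u t w = (t * (s + t + w) / (1 + h * (s + t))) ^ k * (1 + h * (s + t))⁻¹ *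
      w ^ k * u ^ k * s ^ (k - 1) * (s + u + t) ^ (k - 1) := by
  have hD : 0 < 1 + h * (s + t) := by positivity
  unfold swappedTerm
  rw [rpow_sub_one (by positivity), rpow_sub_one hs.ne',
    rpow_sub_one (by positivity : s + u + t ≠ 0), rpow_neg hD.le, rpow_add_one hD.ne',
    div_rpow (by positivity) hD.le]
  repeat rw [mul_rpow (by positivity) (by positivity)]
  field_simp

theorem directTerm_le (hk : 0 ≤ k) (hs : 0 < s) (hu : 0 < u) (ht : 0 < t) (hw : 0 < w)
    (hh : 0 ≤ h) :
    directTerm k h s u t w ≤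
      spreadFactor k h (s + u + t + w) * (w ^ k * t ^ (k - 1)) * ((s + u) ^ k * u ^ (k - 1)) := by
  set L : ℝ := s + u + t + w
  have hbase : s * (s + u + t) * (s + t + w) / (1 + h * (s + t)) ≤
      (s + u) * (L * (L / (1 + h * L))) := by
    calc s * (s + u + t) * (s + t + w) / (1 + h * (s + t))
        ≤ (s + u) * (s + t) * L / (1 + h * (s + t)) := by
          gcongr ?_ * ?_ / _
          · linarith [mul_pos hu ht]
          · linarith
      _ = (s + u) * (L * ((s + t) / (1 + h * (s + t)))) := by ring
      _ ≤ (s + u) * (L * (L / (1 + h * L))) := by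
          gcongr ?_ * (?_ * ?_)
          exact div_one_add_mul_le_div hh (by positivity) (by linarith)
  rw [directTerm_eq hs hu ht hw hh, spreadFactor]
  calc _ ≤ ((s + u) * (L * (L / (1 + h * L)))) ^ k * w ^ k * u ^ (k - 1) * t ^ (k - 1) := by
        gcongr
    _ = _ := by
        rw [mul_rpow (by positivity) (by positivity)]
        ring

theorem add_rpow_sub_one_le {p q t : ℝ} (hk : 0 ≤ k) (hp : 0 ≤ p) (ht : 0 < t) (htq : t ≤ q) :
    (p + t) ^ (k - 1) ≤ ((p + q) / q) ^ k * (t ^ (k - 1) + q ^ (k - 1)) := by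
  have hq : 0 < q := ht.trans_le htq
  have hratio : 1 ≤ (p + q) / q := by
    rw [one_le_div hq]
    linarith
  rcases le_total 1 k with hk1 | hk1
  · calc (p + t) ^ (k - 1) ≤ (p + q) ^ (k - 1) := by gcongr
      _ = ((p + q) / q) ^ (k - 1) * q ^ (k - 1) := by
          rw [← mul_rpow (by positivity) hq.le, div_mul_cancel₀ _ hq.ne']
      _ ≤ ((p + q) / q) ^ k * (t ^ (k - 1) + q ^ (k - 1)) := by
          have hexp : k - 1 ≤ k := by linarith
          have hpow : q ^ (k - 1) ≤ t ^ (k - 1) + q ^ (k - 1) :=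
            le_add_of_nonneg_left (by positivity)
          gcongr
  · calc (p + t) ^ (k - 1) ≤ t ^ (k - 1) :=
          rpow_le_rpow_of_nonpos ht (by linarith) (by linarith)
      _ ≤ t ^ (k - 1) + q ^ (k - 1) := le_add_of_nonneg_right (by positivity)
      _ ≤ ((p + q) / q) ^ k * (t ^ (k - 1) + q ^ (k - 1)) :=
          le_mul_of_one_le_left (by positivity) (one_le_rpow hratio hk)

theorem swappedTerm_le (hk : 0 ≤ k) (hs : 0 < s) (hu : 0 < u) (ht : 0 < t) (hw : 0 < w)
    (hh : 0 ≤ h) :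
    swappedTerm k h s u t w ≤ spreadFactor k h (s + u + t + w) *
      (w ^ k * (t ^ (k - 1) + (t + w) ^ (k - 1))) * (u ^ k * s ^ (k - 1)) := by
  set L : ℝ := s + u + t + w with hL
  have hbase : t * (s + t + w) / (1 + h * (s + t)) ≤ (t + w) * (L / (1 + h * L)) := by
    calc t * (s + t + w) / (1 + h * (s + t)) ≤ (t + w) * (s + t) / (1 + h * (s + t)) := by
          gcongr ?_ / _
          linarith [mul_pos hs hw]
      _ = (t + w) * ((s + t) / (1 + h * (s + t))) := by ring
      _ ≤ (t + w) * (L / (1 + h * L)) := by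
          gcongr ?_ * ?_
          exact div_one_add_mul_le_div hh (by positivity) (by linarith)
  have hinv : (1 + h * (s + t))⁻¹ ≤ 1 := inv_le_one_of_one_le₀
    (le_add_of_nonneg_right (by positivity))
  have hsum : (s + u + t) ^ (k - 1) ≤ (L / (t + w)) ^ k * (t ^ (k - 1) + (t + w) ^ (k - 1)) := by
    rw [hL, add_assoc (s + u) t w]
    exact add_rpow_sub_one_le hk (by positivity) ht (by linarith)
  rw [swappedTerm_eq hs hu ht hw hh]
  calc _ ≤ ((t + w) * (L / (1 + h * L))) ^ k * 1 * w ^ k * u ^ k * s ^ (k - 1) *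
        ((L / (t + w)) ^ k * (t ^ (k - 1) + (t + w) ^ (k - 1))) := by gcongr
    _ = ((L / (t + w)) * ((t + w) * (L / (1 + h * L)))) ^ k *
        (w ^ k * (t ^ (k - 1) + (t + w) ^ (k - 1))) * (u ^ k * s ^ (k - 1)) := by
        rw [mul_rpow (by positivity : 0 ≤ L / (t + w)) (by positivity)]
        ring
    _ = _ := by rw [← mul_assoc (L / (t + w)), div_mul_cancel₀ L (by positivity), spreadFactor]

theorem le_directTerm (hk : 0 ≤ k) (hs : 0 < s) (hu : 0 < u) (ht : 0 < t) (hw : 0 < w)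
    (hh : 0 ≤ h) :
    spreadFactor k h (s + u + t + w) * ((t + w) ^ (-k) * (w ^ k * t ^ (2 * k - 1))) *
      ((s + u) ^ (-k) * (u ^ (k - 1) * s ^ (2 * k))) ≤ directTerm k h s u t w := by
  set L : ℝ := s + u + t + w
  have hP : L * (t / (t + w)) ≤ s + u + t := by
    rw [← mul_div_assoc, div_le_iff₀ (by positivity)]
    linarith [mul_pos (add_pos hs hu) hw]
  have hQ : L * (s / (s + u)) ≤ s + t + w := by
    rw [← mul_div_assoc, div_le_iff₀ (by positivity)]
    linarith [mul_pos (add_pos ht hw) hu]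
  have hD : 1 + h * (s + t) ≤ 1 + h * L := by
    gcongr
    linarith
  have hbase : L * (L / (1 + h * L)) * (s * (t / (t + w)) * (s / (s + u))) ≤
      s * (s + u + t) * (s + t + w) / (1 + h * (s + t)) := by
    calc L * (L / (1 + h * L)) * (s * (t / (t + w)) * (s / (s + u)))
        = s * (L * (t / (t + w))) * (L * (s / (s + u))) / (1 + h * L) := by ring
      _ ≤ s * (s + u + t) * (s + t + w) / (1 + h * (s + t)) := by gcongr
  have hsplit : (s * (t / (t + w)) * (s / (s + u))) ^ k =
      s ^ (2 * k) * t ^ k * ((t + w) ^ (-k) * (s + u) ^ (-k)) := by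
    rw [mul_rpow (by positivity) (by positivity), mul_rpow hs.le (by positivity),
      div_rpow ht.le (by positivity), div_rpow hs.le (by positivity), rpow_neg (by positivity),
      rpow_neg (by positivity), two_mul, rpow_add hs]
    ring
  have ht2 : t ^ (2 * k - 1) = t ^ k * t ^ (k - 1) := by
    rw [← rpow_add ht]
    ring_nf
  rw [directTerm_eq hs hu ht hw hh]
  calc _ = (L * (L / (1 + h * L)) * (s * (t / (t + w)) * (s / (s + u)))) ^ k *
        w ^ k * u ^ (k - 1) * t ^ (k - 1) := by
        rw [spreadFactor, mul_rpow (x := L * (L / (1 + h * L))) (by positivity) (by positivity),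
          hsplit, ht2]
        ring
    _ ≤ _ := by gcongr

end Pointwise

/-- The function of one gap `u` bounding `directTerm` and `swappedTerm` from above, up to
`spreadFactor`; `v` is the complementary gap, so that `u + v` is a simple root evaluated at `λ`. -/
noncomputable def betaMajorant (k m c u v : ℝ) : ℝ :=
  (u + v) ^ (2 * k - m) * betaWeight m 1 c u v + betaWeight (k + 1) k c u v

/-- The counterpart of `betaMajorant` bounding `directTerm` from below. -/
noncomputable def betaMinorant (k m c u v : ℝ) : ℝ :=
  (u + v) ^ (-k) * betaWeight m (3 * k + 1 - m) c u v

section Majorant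

variable {k m : ℝ}

theorem betaMajorant_eq {c u v : ℝ} :
    betaMajorant k m c u v =
      ((u + v) ^ (2 * k - m) * u ^ (m - 1) + u ^ k * v ^ (k - 1)) * exp (-(c * u)) := by
  simp only [betaMajorant, betaWeight, sub_self, rpow_zero, mul_one, add_sub_cancel_right]
  ring

theorem betaMajorant_nonneg {c u v : ℝ} (hu : 0 ≤ u) (hv : 0 ≤ v) :
    0 ≤ betaMajorant k m c u v := by
  rw [betaMajorant_eq]
  positivity

theorem betaMajorant_complementary (c L u : ℝ) :
    betaMajorant k m c u (L - u) = L ^ (2 * k - m) * betaWeight m 1 c u (L - u) +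
      betaWeight (k + 1) k c u (L - u) := by
  rw [betaMajorant, add_sub_cancel]

theorem betaMinorant_complementary (c L u : ℝ) :
    betaMinorant k m c u (L - u) = L ^ (-k) * betaWeight m (3 * k + 1 - m) c u (L - u) := by
  rw [betaMinorant, add_sub_cancel]

theorem intervalIntegrable_betaMajorant {c L : ℝ} (hk : 0 < k) (hm : 0 < m) (hL : 0 < L) :
    IntervalIntegrable (fun u ↦ betaMajorant k m c u (L - u)) volume 0 L := by
  simp only [betaMajorant_complementary]
  exact ((intervalIntegrable_betaWeight hm one_pos hL).const_mul _).add
    (intervalIntegrable_betaWeight (by positivity) hk hL)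

theorem intervalIntegrable_betaMinorant {c L : ℝ} (hm : 0 < m) (hmk : m < 3 * k + 1)
    (hL : 0 < L) : IntervalIntegrable (fun u ↦ betaMinorant k m c u (L - u)) volume 0 L := by
  simp only [betaMinorant_complementary]
  exact (intervalIntegrable_betaWeight hm (sub_pos.2 hmk) hL).const_mul _

theorem exists_integral_betaMajorant_le (hk : 0 < k) (hm : 0 < m) (hmk : m ≤ k + 1) :
    ∃ C, 0 < C ∧ ∀ L c, 0 < L → 0 ≤ c →
      ∫ u in (0 : ℝ)..L, betaMajorant k m c u (L - u) ≤
        C * (L ^ (2 * k) * (1 + c * L) ^ (-m)) := by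
  obtain ⟨C₁, hC₁, h₁⟩ := exists_withinFactor_integral_betaWeight hm one_pos
  obtain ⟨C₂, hC₂, h₂⟩ := exists_withinFactor_integral_betaWeight (m := k + 1) (by positivity) hk
  refine ⟨C₁ + C₂, by positivity, fun L c hL hc ↦ ?_⟩
  have hpow : L ^ (2 * k - m) * L ^ (m + 1 - 1) = L ^ (2 * k) := by
    rw [← rpow_add hL]
    ring_nf
  have hdecay : (1 + c * L) ^ (-(k + 1)) ≤ (1 + c * L) ^ (-m) :=
    rpow_le_rpow_of_exponent_le (le_add_of_nonneg_right (by positivity)) (neg_le_neg hmk)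
  simp only [betaMajorant_complementary]
  rw [intervalIntegral.integral_add ((intervalIntegrable_betaWeight hm one_pos hL).const_mul _)
    (intervalIntegrable_betaWeight (by positivity) hk hL), intervalIntegral.integral_const_mul]
  calc _ ≤ L ^ (2 * k - m) * (C₁ * (L ^ (m + 1 - 1) * (1 + c * L) ^ (-m))) +
        C₂ * (L ^ (k + 1 + k - 1) * (1 + c * L) ^ (-(k + 1))) := by
        gcongr
        exacts [(h₁ L c hL hc).2, (h₂ L c hL hc).2]
    _ = C₁ * (L ^ (2 * k) * (1 + c * L) ^ (-m)) +
        C₂ * (L ^ (2 * k) * (1 + c * L) ^ (-(k + 1))) := by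
        rw [← hpow, show k + 1 + k - 1 = 2 * k - m + (m + 1 - 1) by ring, rpow_add hL]
        ring
    _ ≤ C₁ * (L ^ (2 * k) * (1 + c * L) ^ (-m)) + C₂ * (L ^ (2 * k) * (1 + c * L) ^ (-m)) := by
        gcongr
    _ = _ := by ring

theorem exists_le_integral_betaMinorant (hm : 0 < m) (hmk : m < 3 * k + 1) :
    ∃ K, 0 < K ∧ ∀ L c, 0 < L → 0 ≤ c →
      K * (L ^ (2 * k) * (1 + c * L) ^ (-m)) ≤
        ∫ u in (0 : ℝ)..L, betaMinorant k m c u (L - u) := by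
  obtain ⟨C, hC, h⟩ := exists_withinFactor_integral_betaWeight hm (sub_pos.2 hmk)
  refine ⟨C⁻¹, inv_pos.2 hC, fun L c hL hc ↦ ?_⟩
  have hpow : L ^ (2 * k) = L ^ (-k) * L ^ (m + (3 * k + 1 - m) - 1) := by
    rw [← rpow_add hL]
    ring_nf
  simp only [betaMinorant_complementary]
  rw [intervalIntegral.integral_const_mul, hpow, mul_assoc]
  exact ((h L c hL hc).const_mul (by positivity)).1

end Majorant

/-- The integrand of `EkA2` in the gap coordinates of `directTerm`, with the factor
`e^{(a - b)(λ₁ + λ₃) / 2}` removed, where `a` and `b` are the simple roots evaluated at `X⁺`. -/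
noncomputable def gapKernel (k a b s u t w : ℝ) : ℝ :=
  (s * (s + u + t) * Erk1 k ((a + b) / 2) (s + t) + u * t * Erk1 k (-((a + b) / 2)) (s + t)) *
    ((s + t + w) * w) * exp ((a - b) * (w - u) / 2) *
    (u * (s + u + t) * s * t * (s + t + w) * w) ^ (k - 1)

section GapKernel

variable {k : ℝ}

theorem exists_withinFactor_gapKernel (hk : 0 < k) :
    ∃ C, 0 < C ∧ ∀ a b s u t w, 0 ≤ a → 0 ≤ b → 0 < s → 0 < u → 0 < t → 0 < w →
      WithinFactor C (gapKernel k a b s u t w)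
        (exp ((a + b) / 2 * (s + u + t + w)) * (exp (-(b * w)) * exp (-(a * u)) *
          (directTerm k (a + b) s u t w + swappedTerm k (a + b) s u t w))) := by
  obtain ⟨C₁, hC₁, h₁⟩ := exists_withinFactor_erk1 hk
  obtain ⟨C₂, hC₂, h₂⟩ := exists_withinFactor_erk1_neg hk
  refine ⟨max C₁ C₂, by positivity, fun a b s u t w ha hb hs hu ht hw ↦ ?_⟩
  set E : ℝ := exp ((a - b) * (w - u) / 2)
  set W : ℝ := (u * (s + u + t) * s * t * (s + t + w) * w) ^ (k - 1)
  have hexp : exp ((a + b) / 2 * (s + u + t + w)) * (exp (-(b * w)) * exp (-(a * u))) =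
      E * exp ((a + b) / 2 * (s + t)) := by
    rw [← exp_add, ← exp_add, ← exp_add]
    ring_nf
  have hxv : 0 ≤ (a + b) / 2 * (s + t) := by positivity
  have hdirect := ((h₁ _ _ hxv).mono hC₁ (le_max_left C₁ C₂) (by positivity)).const_mul
    (by positivity : 0 ≤ s * (s + u + t) * ((s + t + w) * w) * E * W)
  have hswapped := ((h₂ _ _ hxv).mono hC₂ (le_max_right C₁ C₂) (by positivity)).const_mul
    (by positivity : 0 ≤ u * t * ((s + t + w) * w) * E * W)
  rw [← mul_assoc, hexp]
  convert hdirect.add hswapped using 1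
  · rw [gapKernel]
    ring
  · rw [directTerm, swappedTerm, show (a + b) / 2 * (s + t) * 2 = (a + b) * (s + t) by ring]
    ring

variable {a b s u t w : ℝ}

theorem directTerm_add_swappedTerm_le (hk : 0 ≤ k) (ha : 0 ≤ a) (hb : 0 ≤ b) (hs : 0 < s)
    (hu : 0 < u) (ht : 0 < t) (hw : 0 < w) :
    exp (-(b * w)) * exp (-(a * u)) *
        (directTerm k (a + b) s u t w + swappedTerm k (a + b) s u t w) ≤
      spreadFactor k (a + b) (s + u + t + w) *
        (betaMajorant k (k + 1) b w t * betaMajorant k k a u s) := by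
  have hh : 0 ≤ a + b := add_nonneg ha hb
  set M : ℝ := spreadFactor k (a + b) (s + u + t + w)
  have : 0 ≤ M := spreadFactor_nonneg hh (by positivity)
  have hdirect := directTerm_le hk hs hu ht hw hh
  have hmono : M * (w ^ k * t ^ (k - 1)) * ((s + u) ^ k * u ^ (k - 1)) ≤
      M * (w ^ k * (t ^ (k - 1) + (t + w) ^ (k - 1))) * ((s + u) ^ k * u ^ (k - 1)) := by
    have : t ^ (k - 1) ≤ t ^ (k - 1) + (t + w) ^ (k - 1) := le_add_of_nonneg_right (by positivity)
    gcongr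
  calc _ ≤ exp (-(b * w)) * exp (-(a * u)) *
        (M * (w ^ k * (t ^ (k - 1) + (t + w) ^ (k - 1))) * ((s + u) ^ k * u ^ (k - 1)) +
          M * (w ^ k * (t ^ (k - 1) + (t + w) ^ (k - 1))) * (u ^ k * s ^ (k - 1))) := by
        gcongr
        exacts [hdirect.trans hmono, swappedTerm_le hk hs hu ht hw hh]
    _ = _ := by
        rw [betaMajorant_eq, betaMajorant_eq, add_comm u s, add_comm w t, add_sub_cancel_right,
          show 2 * k - (k + 1) = k - 1 by ring, show 2 * k - k = k by ring]
        ring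

theorem le_directTerm_add_swappedTerm (hk : 0 ≤ k) (ha : 0 ≤ a) (hb : 0 ≤ b) (hs : 0 < s)
    (hu : 0 < u) (ht : 0 < t) (hw : 0 < w) :
    spreadFactor k (a + b) (s + u + t + w) *
        (betaMinorant k (k + 1) b w t * betaMinorant k k a u s) ≤
      exp (-(b * w)) * exp (-(a * u)) *
        (directTerm k (a + b) s u t w + swappedTerm k (a + b) s u t w) := by
  have hh : 0 ≤ a + b := add_nonneg ha hb
  have hswapped : 0 ≤ swappedTerm k (a + b) s u t w := by
    unfold swappedTerm
    positivity
  calc _ = exp (-(b * w)) * exp (-(a * u)) * (spreadFactor k (a + b) (s + u + t + w) *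
        ((t + w) ^ (-k) * (w ^ k * t ^ (2 * k - 1))) *
        ((s + u) ^ (-k) * (u ^ (k - 1) * s ^ (2 * k)))) := by
        rw [betaMinorant, betaMinorant, betaWeight, betaWeight, add_comm u s, add_comm w t,
          add_sub_cancel_right, show 3 * k + 1 - (k + 1) - 1 = 2 * k - 1 by ring,
          show 3 * k + 1 - k - 1 = 2 * k by ring]
        ring
    _ ≤ _ := by
        gcongr
        exact (le_directTerm hk hs hu ht hw hh).trans (le_add_of_nonneg_right hswapped)

theorem measurable_uncurry_gapKernel (k a b p q : ℝ) :
    Measurable (Function.uncurry fun w u ↦ gapKernel k a b (p - u) u (q - w) w) := by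
  unfold gapKernel Function.uncurry
  fun_prop

theorem exists_gapKernel_bounds (hk : 0 < k) :
    ∃ C, 0 < C ∧ ∀ p q a b, 0 ≤ a → 0 ≤ b → ∀ w ∈ Set.Ioo 0 q, ∀ u ∈ Set.Ioo 0 p,
      C⁻¹ * (exp ((a + b) / 2 * (p + q)) * spreadFactor k (a + b) (p + q)) *
          betaMinorant k (k + 1) b w (q - w) * betaMinorant k k a u (p - u) ≤
        gapKernel k a b (p - u) u (q - w) w ∧
      gapKernel k a b (p - u) u (q - w) w ≤
        C * (exp ((a + b) / 2 * (p + q)) * spreadFactor k (a + b) (p + q)) *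
          betaMajorant k (k + 1) b w (q - w) * betaMajorant k k a u (p - u) := by
  obtain ⟨C, hC, h⟩ := exists_withinFactor_gapKernel hk
  refine ⟨C, hC, fun p q a b ha hb w hw u hu ↦ ?_⟩
  have hs : 0 < p - u := sub_pos.2 hu.2
  have ht : 0 < q - w := sub_pos.2 hw.2
  have hlower := le_directTerm_add_swappedTerm hk.le ha hb hs hu.1 ht hw.1
  have hupper := directTerm_add_swappedTerm_le hk.le ha hb hs hu.1 ht hw.1
  have hkernel := h a b (p - u) u (q - w) w ha hb hs hu.1 ht hw.1
  rw [show p - u + u + (q - w) + w = p + q by ring] at hlower hupper hkernel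
  refine ⟨le_trans ?_ hkernel.1, hkernel.2.trans ?_⟩
  · simp only [mul_assoc] at hlower ⊢
    gcongr
  · simp only [mul_assoc] at hupper ⊢
    gcongr

theorem gapKernel_nonneg (hk : 0 < k) (ha : 0 ≤ a) (hb : 0 ≤ b) (hs : 0 < s) (hu : 0 < u)
    (ht : 0 < t) (hw : 0 < w) : 0 ≤ gapKernel k a b s u t w := by
  obtain ⟨C, hC, h⟩ := exists_withinFactor_gapKernel hk
  refine le_trans ?_ (h a b s u t w ha hb hs hu ht hw).1
  unfold directTerm swappedTerm
  positivity

theorem exists_withinFactor_integral_gapKernel (hk : 0 < k) :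
    ∃ C, 0 < C ∧ ∀ p q a b, 0 < p → 0 < q → 0 ≤ a → 0 ≤ b →
      WithinFactor C (∫ w in (0 : ℝ)..q, ∫ u in (0 : ℝ)..p, gapKernel k a b (p - u) u (q - w) w)
        (exp ((a + b) / 2 * (p + q)) * spreadFactor k (a + b) (p + q) *
          (q ^ (2 * k) * (1 + b * q) ^ (-(k + 1))) * (p ^ (2 * k) * (1 + a * p) ^ (-k))) := by
  have hk1 : 0 < k + 1 := by positivity
  obtain ⟨C, hC, hbounds⟩ := exists_gapKernel_bounds hk
  obtain ⟨C₁, hC₁, hmajor₁⟩ := exists_integral_betaMajorant_le hk hk1 le_rfl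
  obtain ⟨C₂, hC₂, hmajor₂⟩ := exists_integral_betaMajorant_le hk hk (by linarith)
  obtain ⟨K₁, hK₁, hminor₁⟩ := exists_le_integral_betaMinorant (k := k) hk1 (by linarith)
  obtain ⟨K₂, hK₂, hminor₂⟩ := exists_le_integral_betaMinorant (k := k) hk (by linarith)
  refine ⟨C * C₁ * C₂ + (C⁻¹ * K₁ * K₂)⁻¹, by positivity, fun p q a b hp hq ha hb ↦ ?_⟩
  set A : ℝ := exp ((a + b) / 2 * (p + q)) * spreadFactor k (a + b) (p + q)
  have hA : 0 ≤ A := mul_nonneg (exp_pos _).le (spreadFactor_nonneg (by positivity) (by positivity))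
  have hI := integral_integral_mem_Icc_of_le_mul hq.le hp.le
    (measurable_uncurry_gapKernel k a b p q)
    ((intervalIntegrable_betaMinorant hk1 (by linarith) hq).const_mul (C⁻¹ * A))
    (intervalIntegrable_betaMinorant hk (by linarith) hp)
    ((intervalIntegrable_betaMajorant hk hk1 hq).const_mul (C * A))
    (intervalIntegrable_betaMajorant hk hk hp)
    (fun w hw u hu ↦ gapKernel_nonneg hk ha hb (sub_pos.2 hu.2) hu.1 (sub_pos.2 hw.2) hw.1)
    (fun w hw u hu ↦ (hbounds p q a b ha hb w hw u hu).1)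
    (fun w hw u hu ↦ (hbounds p q a b ha hb w hw u hu).2)
  simp only [intervalIntegral.integral_const_mul] at hI
  refine WithinFactor.of_le_of_le (by positivity) (by positivity) (by positivity)
    (le_trans ?_ hI.1) (hI.2.trans ?_)
  · have hw := hminor₁ q b hq hb
    calc _ = C⁻¹ * A * (K₁ * (q ^ (2 * k) * (1 + b * q) ^ (-(k + 1)))) *
          (K₂ * (p ^ (2 * k) * (1 + a * p) ^ (-k))) := by ring
      _ ≤ _ := mul_le_mul (mul_le_mul_of_nonneg_left hw (by positivity)) (hminor₂ p a hp ha)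
        (by positivity) (mul_nonneg (by positivity) (le_trans (by positivity) hw))
  · have hu := intervalIntegral.integral_nonneg (μ := volume) hp.le fun u hu ↦
      betaMajorant_nonneg (k := k) (m := k) (c := a) hu.1 (sub_nonneg.2 hu.2)
    calc _ ≤ C * A * (C₁ * (q ^ (2 * k) * (1 + b * q) ^ (-(k + 1)))) *
          (C₂ * (p ^ (2 * k) * (1 + a * p) ^ (-k))) := by
          gcongr
          exacts [hmajor₁ q b hq hb, hmajor₂ p a hp ha]
      _ = _ := by ring

end GapKernel

/-! ### The kernel of type `A₂` -/

theorem integral_integral_eq_gaps (f : ℝ → ℝ → ℝ) (a b c d : ℝ) :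
    ∫ y in c..d, ∫ x in a..b, f x y =
      ∫ w in (0 : ℝ)..(d - c), ∫ u in (0 : ℝ)..(b - a), f (b - u) (c + w) := by
  have hinner (w : ℝ) := intervalIntegral.integral_comp_sub_left (a := 0) (b := b - a)
    (fun x ↦ f x (c + w)) b
  have houter := intervalIntegral.integral_comp_add_left (a := 0) (b := d - c)
    (fun y ↦ ∫ x in a..b, f x y) c
  simp only [sub_zero, sub_sub_cancel, add_zero, add_sub_cancel] at hinner houter
  simp only [hinner, houter]

theorem ekA2_eq_integral_gapKernel (k x1 x2 x3 l1 l2 l3 : ℝ) :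
    EkA2 k x1 x2 x3 l1 l2 l3 = 3 * Gamma (3 * k) / (Vlam l1 l2 l3 ^ (2 * k) * Gamma k ^ 2) *
      (exp ((x1 - x3 - (x3 - x2)) * (l1 + l3) / 2) *
        ∫ w in (0 : ℝ)..(l2 - l3), ∫ u in (0 : ℝ)..(l1 - l2),
          gapKernel k (x1 - x3) (x3 - x2) (l1 - l2 - u) u (l2 - l3 - w) w) := by
  have hexp (u w : ℝ) : exp ((x1 + x2 - 2 * x3) * (l1 - u + (l3 + w)) / 2) =
      exp ((x1 - x3 - (x3 - x2)) * (l1 + l3) / 2) *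
        exp ((x1 - x3 - (x3 - x2)) * (w - u) / 2) := by
    rw [← exp_add]
    ring_nf
  rw [EkA2, integral_integral_eq_gaps (fun n1 n2 ↦ _)]
  simp only [← intervalIntegral.integral_const_mul (exp _)]
  congr 3 with w
  congr 1 with u
  rw [Wk, gapKernel, hexp]
  ring_nf

theorem spreadFactor_mul_mul_eq {k p q a b : ℝ} (hp : 0 < p) (hq : 0 < q) (ha : 0 ≤ a)
    (hb : 0 ≤ b) :
    spreadFactor k (a + b) (p + q) * (q ^ (2 * k) * (1 + b * q) ^ (-(k + 1))) *
        (p ^ (2 * k) * (1 + a * p) ^ (-k)) =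
      (p * (p + q) * q) ^ (2 * k) /
        ((1 + p * a) ^ k * (1 + q * b) ^ (k + 1) * (1 + (p + q) * (a + b)) ^ k) := by
  have hL : 0 < p + q := add_pos hp hq
  have hsq : ((p + q) * (p + q)) ^ k = (p + q) ^ (2 * k) := by
    rw [mul_rpow hL.le hL.le, ← rpow_add hL, two_mul]
  rw [spreadFactor, mul_rpow (by positivity) hq.le, mul_rpow hp.le hL.le, ← mul_div_assoc,
    div_rpow (by positivity) (by positivity), hsq, rpow_neg (by positivity),
    rpow_neg (by positivity), mul_comm p a, mul_comm q b, mul_comm (p + q) (a + b)]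
  ring

theorem estimate_C132_general {k : ℝ} (hk : 0 < k) :
    ∃ C : ℝ, 0 < C ∧ ∀ l1 l2 l3 x1 x2 x3 : ℝ, l2 < l1 → l3 < l2 → x3 ≤ x1 → x2 ≤ x3 →
      WithinFactor C (EkA2 k x1 x2 x3 l1 l2 l3)
        (exp (l1 * (x1 - x3) - l3 * (x3 - x2)) /
          ((1 + (l1 - l2) * (x1 - x3)) ^ k * (1 + (l2 - l3) * (x3 - x2)) ^ (k + 1)
            * (1 + (l1 - l3) * (x1 - x2)) ^ k)) := by
  obtain ⟨C, hC, h⟩ := exists_withinFactor_integral_gapKernel hk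
  set r : ℝ := 3 * Gamma (3 * k) / Gamma k ^ 2 with hr
  have : 0 < r := by positivity
  refine ⟨C * r + (C⁻¹ * r)⁻¹, by positivity, fun l1 l2 l3 x1 x2 x3 h12 h23 h31 h32 ↦ ?_⟩
  have hp : 0 < l1 - l2 := sub_pos.2 h12
  have hq : 0 < l2 - l3 := sub_pos.2 h23
  have ha : 0 ≤ x1 - x3 := sub_nonneg.2 h31
  have hb : 0 ≤ x3 - x2 := sub_nonneg.2 h32
  have hL : 0 < l1 - l3 := by linarith
  have hc : 0 ≤ x1 - x2 := by linarith
  have hV : 0 < Vlam l1 l2 l3 := by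
    unfold Vlam
    positivity
  have hexp : exp (l1 * (x1 - x3) - l3 * (x3 - x2)) =
      exp ((x1 - x3 - (x3 - x2)) * (l1 + l3) / 2) * exp ((x1 - x2) / 2 * (l1 - l3)) := by
    rw [← exp_add]
    ring_nf
  have hprofile := spreadFactor_mul_mul_eq (k := k) hp hq ha hb
  have hkernel := ((h _ _ _ _ hp hq ha hb).const_mul
    (exp_pos ((x1 - x3 - (x3 - x2)) * (l1 + l3) / 2)).le).const_mul
    (by positivity : 0 ≤ 3 * Gamma (3 * k) / (Vlam l1 l2 l3 ^ (2 * k) * Gamma k ^ 2))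
  simp only [sub_add_sub_cancel, mul_assoc (exp _)] at hprofile hkernel
  refine WithinFactor.absorb_const ?_ hC (by positivity) (by positivity)
  rw [ekA2_eq_integral_gapKernel]
  convert hkernel using 1
  rw [hprofile, ← Vlam, hexp, hr]
  field_simp

/-- Theorem 4.1: sharp estimate of the `A₂` Dunkl kernel. -/
theorem estimate_C132 (k : ℝ) (hk : 0 < k) :
    ∃ C : ℝ, 0 < C ∧ ∀ l1 l2 l3 x1 x2 x3 : ℝ,
      l1 + l2 + l3 = 0 →
      l2 < l1 →
      l3 < l2 →
      x1 + x2 + x3 = 0 →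
      x3 ≤ x1 →
      x2 ≤ x3 →
      (C⁻¹ * (Real.exp (l1 * x1 + l2 * x3 + l3 * x2) /
          ((1 + (l1 - l2) * (x1 - x3)) ^ k * (1 + (l2 - l3) * (x3 - x2)) ^ (k + 1)
            * (1 + (l1 - l3) * (x1 - x2)) ^ k))
        ≤ EkA2 k x1 x2 x3 l1 l2 l3 ∧
      EkA2 k x1 x2 x3 l1 l2 l3
        ≤ C * (Real.exp (l1 * x1 + l2 * x3 + l3 * x2) /
          ((1 + (l1 - l2) * (x1 - x3)) ^ k * (1 + (l2 - l3) * (x3 - x2)) ^ (k + 1)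
            * (1 + (l1 - l3) * (x1 - x2)) ^ k))) := by
  obtain ⟨C, hC, h⟩ := estimate_C132_general hk
  refine ⟨C, hC, fun l1 l2 l3 x1 x2 x3 hl h12 h23 _ h31 h32 ↦ ?_⟩
  have hexp : l1 * x1 + l2 * x3 + l3 * x2 = l1 * (x1 - x3) - l3 * (x3 - x2) := by
    linear_combination x3 * hl
  rw [hexp]
  exact h l1 l2 l3 x1 x2 x3 h12 h23 h31 h32
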